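/- Let H_< be an ordered graph and let δ > 0. Then there exists a constant c₂ = c₂(H_<, δ) > 0 such that every ordered graph G_< on n vertices that does not contain H_< as an induced ordered subgraph has the following property: there is a subset U of the vertex set of G with |U| ≥ c₂·n such that the maximum degree of G[U] is at most δ·|U|, or the maximum degree of the complement of G[U] is at most δ·|U|. -/

import Mathlib

/-- The ordered graph `H` (on `Fin a` with its natural order) is contained in the ordered
graph `G` (on `Fin b` with its natural order) as an induced ordered subgraph. -/
def ContainsOrdered {a b : ℕ} (H : SimpleGraph (Fin a)) (G : SimpleGraph (Fin b)) : Prop :=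
  ∃ φ : Fin a → Fin b, StrictMono φ ∧ ∀ u v : Fin a, H.Adj u v ↔ G.Adj (φ u) (φ v)

/-- The degree of `v` in the subgraph of `G` induced by `U`. -/
noncomputable def degIn {V : Type*} (G : SimpleGraph V) (U : Finset V) (v : V) : ℕ :=
  {w : V | w ∈ U ∧ G.Adj v w}.ncard

/-!
Fix `ε > 0` and take equally large parts, one for each vertex of `H`, which are intervals of a
vertex set `S` in the order of `H`. Embed the vertices of `H` one at a time, each into its own part,
keeping in every later part only the vertices with the right adjacency. Since `G` contains no copy
of `H`, at some moment every candidate for the next vertex would shrink some later part by more than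
the factor `ε`; by pigeonhole, this gives large disjoint sets `A`, `B` such that every vertex of `A`
has few neighbours, or few non-neighbours, in `B`.

Say that `S` is `ε`-good for `G` if it has subsets of every size up to `c |S|` with edge density
at most `ε`. If `A` is sparse to `B`, then gluing sparse subsets of `A` and of most of `B`, of equal
size and with edge density `3ε/2`, yields edge density at most `ε`, because the pairs across, about
half of all pairs, contribute very little. By induction on `i + j`, every set is
`(2/3)^i`-good for `G` or `(2/3)^j`-good for its complement. Finally, deleting the vertices of large
degree turns small edge density into small maximum degree.
-/

open Finset

section Markov

variable {α : Type*}

theorem card_le_two_mul_card_filter_le {s : Finset α} {f : α → ℝ} {t : ℝ} (ht : 0 ≤ t)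
    (hf : ∀ x ∈ s, 0 ≤ f x) (hsum : ∑ x ∈ s, f x ≤ t / 2 * #s) :
    #s ≤ 2 * #{x ∈ s | f x ≤ t} := by
  by_contra! hlt
  have hsplit : #{x ∈ s | f x ≤ t} + #{x ∈ s | ¬ f x ≤ t} = #s :=
    card_filter_add_card_filter_not _
  have hlarge : (#s : ℝ) ≤ 2 * #{x ∈ s | ¬ f x ≤ t} := by exact_mod_cast (by lia)
  have hne : ({x ∈ s | ¬ f x ≤ t} : Finset α).Nonempty := card_pos.1 (by lia)
  have : t * #{x ∈ s | ¬ f x ≤ t} < t * #{x ∈ s | ¬ f x ≤ t} :=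
    calc t * #{x ∈ s | ¬ f x ≤ t} = ∑ x ∈ s with ¬ f x ≤ t, t := by simp [mul_comm]
      _ < ∑ x ∈ s with ¬ f x ≤ t, f x :=
        sum_lt_sum_of_nonempty hne fun x hx => not_le.1 (mem_filter.1 hx).2
      _ ≤ ∑ x ∈ s, f x :=
        sum_le_sum_of_subset_of_nonneg (filter_subset _ _) fun x hx _ => hf x hx
      _ ≤ t / 2 * #s := hsum
      _ ≤ t / 2 * (2 * #{x ∈ s | ¬ f x ≤ t}) := by gcongr
      _ = t * #{x ∈ s | ¬ f x ≤ t} := by ring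
  exact this.false

end Markov

section Degree

variable {V : Type*} {G : SimpleGraph V} {A B U W : Finset V} {v : V} {δ ε ε' : ℝ}

theorem degIn_eq_card_filter (G : SimpleGraph V) [DecidableRel G.Adj] (U : Finset V) (v : V) :
    degIn G U v = #{w ∈ U | G.Adj v w} := by
  rw [degIn, ← Set.ncard_coe_finset, coe_filter]

theorem degIn_mono (h : U ⊆ W) : degIn G U v ≤ degIn G W v := by
  classical
  simp only [degIn_eq_card_filter]
  exact card_le_card (filter_subset_filter _ h)

theorem degIn_le_card : degIn G U v ≤ #U := by
  classical
  rw [degIn_eq_card_filter]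
  exact card_filter_le _ _

theorem degIn_union [DecidableEq V] (h : Disjoint A B) :
    degIn G (A ∪ B) v = degIn G A v + degIn G B v := by
  classical
  simp only [degIn_eq_card_filter]
  rw [filter_union, card_union_of_disjoint (disjoint_filter_filter h)]

theorem sum_degIn_comm (G : SimpleGraph V) (A B : Finset V) :
    ∑ v ∈ A, degIn G B v = ∑ w ∈ B, degIn G A w := by
  classical
  simp only [degIn_eq_card_filter]
  simpa only [bipartiteAbove, bipartiteBelow, G.adj_comm] using
    sum_card_bipartiteAbove_eq_sum_card_bipartiteBelow (s := A) (t := B) G.Adj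

theorem sum_degIn_union [DecidableEq V] (h : Disjoint A B) :
    ∑ v ∈ A ∪ B, degIn G (A ∪ B) v =
      ∑ v ∈ A, degIn G A v + ∑ v ∈ B, degIn G B v + 2 * ∑ v ∈ B, degIn G A v := by
  simp only [sum_union h, degIn_union h, sum_add_distrib, sum_degIn_comm G A B]
  ring

theorem sum_degIn_eq_zero_of_card_le_one (hU : #U ≤ 1) : ∑ v ∈ U, degIn G U v = 0 := by
  classical
  refine sum_eq_zero fun v hv => ?_
  rw [degIn_eq_card_filter, card_filter_eq_zero_iff]
  intro w hw
  rw [card_le_one.1 hU v hv w hw]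
  exact G.irrefl

/-- `A` is `ε`-sparse to `B` if every vertex of `A` has at most `ε |B|` neighbours in `B`. In
particular, `IsSparseTo G δ U U` says that `G[U]` has maximum degree at most `δ |U|`. -/
def IsSparseTo (G : SimpleGraph V) (ε : ℝ) (A B : Finset V) : Prop :=
  ∀ v ∈ A, (degIn G B v : ℝ) ≤ ε * #B

namespace IsSparseTo

theorem mono (h : IsSparseTo G ε A B) (hε : ε ≤ ε') : IsSparseTo G ε' A B :=
  fun v hv => (h v hv).trans (by gcongr)

theorem subset_left (h : IsSparseTo G ε A B) (hUA : U ⊆ A) : IsSparseTo G ε U B :=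
  fun v hv => h v (hUA hv)

theorem sum_degIn_le (h : IsSparseTo G ε A B) : ∑ v ∈ A, (degIn G B v : ℝ) ≤ ε * #A * #B := by
  calc ∑ v ∈ A, (degIn G B v : ℝ) ≤ ∑ _v ∈ A, ε * (#B : ℝ) := sum_le_sum h
    _ = ε * #A * #B := by rw [sum_const, nsmul_eq_mul]; ring

theorem exists_symm (hε : 0 ≤ ε) (h : IsSparseTo G (ε / 2) A B) :
    ∃ C ⊆ B, #B ≤ 2 * #C ∧ IsSparseTo G ε C A := by
  refine ⟨{w ∈ B | (degIn G A w : ℝ) ≤ ε * #A}, filter_subset _ _,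
    card_le_two_mul_card_filter_le (by positivity) (fun _ _ => by positivity) ?_,
    fun w hw => (mem_filter.1 hw).2⟩
  calc ∑ w ∈ B, (degIn G A w : ℝ) = ∑ v ∈ A, (degIn G B v : ℝ) :=
        mod_cast (sum_degIn_comm G A B).symm
    _ ≤ ε / 2 * #A * #B := h.sum_degIn_le
    _ = ε * #A / 2 * #B := by ring

end IsSparseTo

theorem exists_subset_isSparseTo_self (hδ : 0 ≤ δ)
    (hU : ∑ v ∈ U, (degIn G U v : ℝ) ≤ δ / 4 * #U ^ 2) :
    ∃ W ⊆ U, #U ≤ 2 * #W ∧ IsSparseTo G δ W W := by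
  have hWU : {v ∈ U | (degIn G U v : ℝ) ≤ δ / 2 * #U} ⊆ U := filter_subset _ _
  have hhalf : #U ≤ 2 * #{v ∈ U | (degIn G U v : ℝ) ≤ δ / 2 * #U} :=
    card_le_two_mul_card_filter_le (by positivity) (fun _ _ => by positivity)
      (hU.trans_eq (by ring))
  refine ⟨_, hWU, hhalf, fun v hv => ?_⟩
  calc (degIn G _ v : ℝ) ≤ degIn G U v := mod_cast degIn_mono hWU
    _ ≤ δ / 2 * #U := (mem_filter.1 hv).2
    _ ≤ δ / 2 * (2 * #{v ∈ U | (degIn G U v : ℝ) ≤ δ / 2 * #U}) := by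
      gcongr; exact_mod_cast hhalf
    _ = δ * #{v ∈ U | (degIn G U v : ℝ) ≤ δ / 2 * #U} := by ring

end Degree

section SparseSubsets

/-- The coefficient `3 / 2` is just below `2`, which would do for `a = b` and no cross term. -/
theorem balanced_sum_le_sq {a b : ℕ} (hba : b ≤ a) (hab : a ≤ b + 1) (h : 1 < a + b) :
    3 / 2 * ((a : ℝ) ^ 2 + b ^ 2) + a * b / 4 ≤ ((a + b : ℕ) : ℝ) ^ 2 := by
  push_cast
  have hba' : (b : ℝ) ≤ a := by exact_mod_cast hba
  have hab' : (a : ℝ) ≤ b + 1 := by exact_mod_cast hab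
  have h' : (2 : ℝ) ≤ a + b := by exact_mod_cast h
  nlinarith [mul_nonneg (sub_nonneg.2 hba') (sub_nonneg.2 hab')]

variable {V : Type*} {G G' : SimpleGraph V} {A B S T : Finset V} {γ δ ε ε' c c' : ℝ}

/-- `S` has subsets of every size `m ≤ c |S|` with edge density at most `ε`, where edge density is
the number of ordered pairs of adjacent vertices divided by `m ^ 2`. -/
def HasSparseSubsets (G : SimpleGraph V) (ε c : ℝ) (S : Finset V) : Prop :=
  ∀ m : ℕ, (m : ℝ) ≤ c * #S → ∃ U ⊆ S, #U = m ∧ ∑ v ∈ U, (degIn G U v : ℝ) ≤ ε * m ^ 2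

theorem hasSparseSubsets_one_one (G : SimpleGraph V) (S : Finset V) :
    HasSparseSubsets G 1 1 S := by
  intro m hm
  obtain ⟨U, hUS, rfl⟩ := exists_subset_card_eq (s := S) (n := m) (by simpa using hm)
  have hself : IsSparseTo G 1 U U := fun v _ => by rw [one_mul]; exact_mod_cast degIn_le_card
  exact ⟨U, hUS, rfl, hself.sum_degIn_le.trans_eq (by ring)⟩

theorem hasSparseSubsets_of_mul_card_lt_one (h : c * #S < 1) : HasSparseSubsets G ε c S := by
  intro m hm
  obtain rfl : m = 0 := by
    have : (m : ℝ) < 1 := hm.trans_lt h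
    exact Nat.lt_one_iff.1 (mod_cast this)
  exact ⟨∅, empty_subset S, card_empty, by simp⟩

namespace HasSparseSubsets

theorem mono (h : HasSparseSubsets G ε c S) (hST : S ⊆ T) (hc : c' * #T ≤ c * #S) :
    HasSparseSubsets G ε c' T := by
  intro m hm
  obtain ⟨U, hUS, hU⟩ := h m (hm.trans hc)
  exact ⟨U, hUS.trans hST, hU⟩

theorem mono_density (h : HasSparseSubsets G ε c S) (hε : ε ≤ ε') :
    HasSparseSubsets G ε' c S := by
  intro m hm
  obtain ⟨U, hUS, hUm, hU⟩ := h m hm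
  exact ⟨U, hUS, hUm, hU.trans (by gcongr)⟩

theorem mono_ratio (h : HasSparseSubsets G ε c S) (hc : c' ≤ c) : HasSparseSubsets G ε c' S :=
  h.mono Subset.rfl (by gcongr)

theorem exists_large (h : HasSparseSubsets G ε c S) (hε : 0 ≤ ε) :
    ∃ U ⊆ S, c / 2 * #S ≤ #U ∧ ∑ v ∈ U, (degIn G U v : ℝ) ≤ ε * #U ^ 2 := by
  rcases S.eq_empty_or_nonempty with rfl | ⟨x, hx⟩
  · exact ⟨∅, Subset.rfl, by simp, by simp⟩
  rcases lt_or_ge (c * #S) 1 with hsmall | hlarge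
  · have hzero : ∑ v ∈ {x}, degIn G {x} v = 0 := sum_degIn_eq_zero_of_card_le_one (by simp)
    refine ⟨{x}, by simpa using hx, by rw [card_singleton]; push_cast; linarith, ?_⟩
    rw [← Nat.cast_sum, hzero, Nat.cast_zero]
    positivity
  · obtain ⟨U, hUS, hUm, hU⟩ := h ⌊c * #S⌋₊ (Nat.floor_le (by linarith))
    rw [← hUm] at hU
    refine ⟨U, hUS, ?_, hU⟩
    have hlt : c * #S < #U + 1 := hUm ▸ Nat.lt_floor_add_one _
    have hone : (1 : ℝ) ≤ #U := by exact_mod_cast hUm ▸ Nat.one_le_floor_iff _ |>.2 hlarge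
    linarith

theorem exists_isSparseTo_self (h : HasSparseSubsets G (δ / 4) c S) (hδ : 0 ≤ δ) :
    ∃ U ⊆ S, c / 4 * #S ≤ #U ∧ IsSparseTo G δ U U := by
  obtain ⟨W, hWS, hW, hsum⟩ := h.exists_large (by positivity)
  obtain ⟨U, hUW, hU, hsparse⟩ := exists_subset_isSparseTo_self hδ hsum
  have : (#W : ℝ) ≤ 2 * #U := by exact_mod_cast hU
  exact ⟨U, hUW.trans hWS, by linarith, hsparse⟩

theorem of_isSparseTo (hε : 0 ≤ ε) (hc : 0 ≤ c) (hAS : A ⊆ S) (hBS : B ⊆ S) (hAB : Disjoint A B)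
    (hcA : c' * #S ≤ c * #A) (hcB : c' * #S ≤ c * #B) (hsparse : IsSparseTo G (ε / 16) A B)
    (hA : HasSparseSubsets G (3 / 2 * ε) c A)
    (hB : ∀ C ⊆ B, #B ≤ 2 * #C → HasSparseSubsets G (3 / 2 * ε) c C) :
    HasSparseSubsets G ε c' S := by
  classical
  intro m hm
  rcases le_or_gt m 1 with hm1 | hm1
  · obtain ⟨U, hUA, rfl, -⟩ := hA m (hm.trans hcA)
    refine ⟨U, hUA.trans hAS, rfl, ?_⟩
    rw [← Nat.cast_sum, sum_degIn_eq_zero_of_card_le_one hm1, Nat.cast_zero]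
    positivity
  obtain ⟨a, b, rfl, hba, hab⟩ : ∃ a b : ℕ, a + b = m ∧ b ≤ a ∧ a ≤ b + 1 :=
    ⟨(m + 1) / 2, m / 2, by lia, by lia, by lia⟩
  have hba' : (b : ℝ) ≤ a := by exact_mod_cast hba
  push_cast at hm
  obtain ⟨X, hXA, rfl, hX⟩ := hA a (by linarith [b.cast_nonneg (α := ℝ)])
  have hXB : IsSparseTo G (ε / 8 / 2) X B := (hsparse.subset_left hXA).mono (by linarith)
  obtain ⟨C, hCB, hCcard, hC⟩ := hXB.exists_symm (by positivity)
  have hbC : (b : ℝ) ≤ c * #C := by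
    have : c * #B ≤ c * (2 * #C) := by gcongr; exact_mod_cast hCcard
    linarith
  obtain ⟨Y, hYC, rfl, hY⟩ := hB C hCB hCcard b hbC
  have hXY : Disjoint X Y := hAB.mono hXA (hYC.trans hCB)
  refine ⟨X ∪ Y, union_subset (hXA.trans hAS) ((hYC.trans hCB).trans hBS),
    card_union_of_disjoint hXY, ?_⟩
  calc ∑ v ∈ X ∪ Y, (degIn G (X ∪ Y) v : ℝ)
      = ∑ v ∈ X, (degIn G X v : ℝ) + ∑ v ∈ Y, (degIn G Y v : ℝ)
          + 2 * ∑ v ∈ Y, (degIn G X v : ℝ) := mod_cast sum_degIn_union hXY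
    _ ≤ 3 / 2 * ε * #X ^ 2 + 3 / 2 * ε * #Y ^ 2 + 2 * (ε / 8 * #Y * #X) := by
      gcongr
      exact (hC.subset_left hYC).sum_degIn_le
    _ = ε * (3 / 2 * (#X ^ 2 + #Y ^ 2) + #X * #Y / 4) := by ring
    _ ≤ ε * ((#X + #Y : ℕ) : ℝ) ^ 2 := by
      gcongr
      exact balanced_sum_le_sq hba hab hm1

end HasSparseSubsets

theorem hasSparseSubsets_or_of_isSparseTo (hε : 0 ≤ ε) (hc : 0 ≤ c) (hAS : A ⊆ S) (hBS : B ⊆ S)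
    (hAB : Disjoint A B) (hA : γ * #S ≤ #A) (hB : γ * #S ≤ #B)
    (hsparse : IsSparseTo G (ε / 16) A B)
    (ih : ∀ T, HasSparseSubsets G (3 / 2 * ε) c T ∨ HasSparseSubsets G' ε' c T) :
    HasSparseSubsets G ε (c * γ / 2) S ∨ HasSparseSubsets G' ε' (c * γ / 2) S := by
  refine or_iff_not_imp_right.2 fun hG' => ?_
  have hinherit : ∀ T ⊆ S, c * γ / 2 * #S ≤ c * #T → HasSparseSubsets G (3 / 2 * ε) c T :=
    fun T hTS hT => (ih T).resolve_right fun h => hG' (h.mono hTS hT)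
  have hcA : c * (γ * #S) ≤ c * #A := by gcongr
  have hcB : c * (γ * #S) ≤ c * #B := by gcongr
  have hA0 : 0 ≤ c * #A := by positivity
  have hB0 : 0 ≤ c * #B := by positivity
  refine .of_isSparseTo hε hc hAS hBS hAB (by linarith) (by linarith) hsparse
    (hinherit A hAS (by linarith)) fun C hCB hC => hinherit C (hCB.trans hBS) ?_
  have : c * #B ≤ c * (2 * #C) := by gcongr; exact_mod_cast hC
  linarith

end SparseSubsets

section Transversal

variable {ι V : Type*} {H : SimpleGraph ι} {G : SimpleGraph V} {I : Finset ι} {a : ι}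
  {P : ι → Finset V} {A : Finset V} {ε s : ℝ}

theorem isSparseTo_or_isSparseTo_compl_of_card_filter_le [DecidableRel G.Adj] {B : Finset V}
    {p : Prop} [Decidable p] (h : ∀ v ∈ A, (#{w ∈ B | p ↔ G.Adj v w} : ℝ) ≤ ε * #B) :
    IsSparseTo G ε A B ∨ IsSparseTo Gᶜ ε A B := by
  classical
  by_cases hp : p
  · left
    intro v hv
    simpa only [degIn_eq_card_filter, hp, true_iff] using h v hv
  · right
    intro v hv
    simp only [hp, false_iff] at h
    rw [degIn_eq_card_filter]
    refine le_trans (mod_cast card_le_card fun w hw => ?_) (h v hv)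
    rw [mem_filter, SimpleGraph.compl_adj] at hw
    exact mem_filter.2 ⟨hw.1, hw.2.2⟩

theorem exists_isSparseTo_of_forall_exists_card_filter_le [DecidableRel H.Adj] [DecidableRel G.Adj]
    (hA : A.Nonempty)
    (h : ∀ v ∈ A, ∃ j ∈ I, (#{w ∈ P j | H.Adj a j ↔ G.Adj v w} : ℝ) ≤ ε * #(P j)) :
    ∃ j ∈ I, ∃ B ⊆ A, (#A / #I : ℝ) ≤ #B ∧
      (IsSparseTo G ε B (P j) ∨ IsSparseTo Gᶜ ε B (P j)) := by
  classical
  obtain ⟨v₀, hv₀⟩ := hA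
  obtain ⟨j₀, hj₀, -⟩ := h v₀ hv₀
  have : Nonempty ι := ⟨j₀⟩
  have hI : (#I : ℝ) ≠ 0 := by exact_mod_cast card_ne_zero_of_mem hj₀
  choose! f hfI hf using h
  obtain ⟨j, hj, hcard⟩ := exists_le_card_fiber_of_nsmul_le_card_of_maps_to
    (b := (#A / #I : ℝ)) hfI ⟨j₀, hj₀⟩ (by rw [nsmul_eq_mul, mul_div_cancel₀ _ hI])
  refine ⟨j, hj, {v ∈ A | f v = j}, filter_subset _ _, hcard,
    isSparseTo_or_isSparseTo_compl_of_card_filter_le (p := H.Adj a j) fun v hv => ?_⟩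
  obtain ⟨hvA, rfl⟩ := mem_filter.1 hv
  exact hf v hvA

/-- `φ` maps the vertices of `I` to an induced copy of `H[I]` in `G`, the vertex `i` going to the
part `P i`; values of `φ` outside `I` are irrelevant. -/
def IsTransversalCopy (H : SimpleGraph ι) (G : SimpleGraph V) (P : ι → Finset V) (I : Finset ι)
    (φ : ι → V) : Prop :=
  (∀ i ∈ I, φ i ∈ P i) ∧ ∀ i ∈ I, ∀ j ∈ I, H.Adj i j ↔ G.Adj (φ i) (φ j)

theorem IsTransversalCopy.update_insert [DecidableEq ι] [DecidableRel H.Adj] [DecidableRel G.Adj]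
    {φ : ι → V} {v : V} (ha : a ∉ I) (hv : v ∈ P a)
    (hφ : IsTransversalCopy H G (fun j => {w ∈ P j | H.Adj a j ↔ G.Adj v w}) I φ) :
    IsTransversalCopy H G P (insert a I) (Function.update φ a v) := by
  have hne : ∀ i ∈ I, i ≠ a := fun i hi => ne_of_mem_of_not_mem hi ha
  have hadj : ∀ i ∈ I, H.Adj a i ↔ G.Adj v (φ i) := fun i hi => (mem_filter.1 (hφ.1 i hi)).2
  constructor
  · rw [forall_mem_insert]
    refine ⟨by simpa using hv, fun i hi => ?_⟩
    rw [Function.update_of_ne (hne i hi)]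
    exact (mem_filter.1 (hφ.1 i hi)).1
  · simp only [forall_mem_insert, Function.update_self]
    refine ⟨⟨by simp, fun j hj => ?_⟩, fun i hi => ⟨?_, fun j hj => ?_⟩⟩
    · rw [Function.update_of_ne (hne j hj), hadj j hj]
    · rw [Function.update_of_ne (hne i hi), H.adj_comm, G.adj_comm, hadj i hi]
    · rw [Function.update_of_ne (hne i hi), Function.update_of_ne (hne j hj), hφ.2 i hi j hj]

theorem exists_isTransversalCopy_or_isSparseTo [Fintype ι] [Nonempty V] (hε : 0 < ε) (hε1 : ε ≤ 1)
    (H : SimpleGraph ι) (G : SimpleGraph V) (I : Finset ι) (P : ι → Finset V) (hs : 0 < s)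
    (hP : ∀ i ∈ I, s ≤ #(P i)) :
    (∃ φ, IsTransversalCopy H G P I φ) ∨
      ∃ i j, i ≠ j ∧ ∃ A ⊆ P i, ∃ B ⊆ P j,
        ε ^ #I * s / Fintype.card ι ≤ #A ∧ ε ^ #I * s / Fintype.card ι ≤ #B ∧
          (IsSparseTo G ε A B ∨ IsSparseTo Gᶜ ε A B) := by
  classical
  induction I using Finset.induction_on generalizing P s with
  | empty => exact .inl ⟨fun _ => Classical.arbitrary V, by simp [IsTransversalCopy]⟩
  | insert a I ha ih =>
    rw [forall_mem_insert] at hP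
    rw [card_insert_of_notMem ha]
    by_cases! hgood : ∃ v ∈ P a, ∀ j ∈ I,
        ε * #(P j) ≤ (#{w ∈ P j | H.Adj a j ↔ G.Adj v w} : ℝ)
    · obtain ⟨v, hv, hlarge⟩ := hgood
      have hlarge' : ∀ j ∈ I, ε * s ≤ (#{w ∈ P j | H.Adj a j ↔ G.Adj v w} : ℝ) :=
        fun j hj => (mul_le_mul_of_nonneg_left (hP.2 j hj) hε.le).trans (hlarge j hj)
      rcases ih _ (mul_pos hε hs) hlarge' with ⟨φ, hφ⟩ | ⟨i, j, hij, A, hA, B, hB, hAB⟩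
      · exact .inl ⟨_, hφ.update_insert ha hv⟩
      · rw [← mul_assoc, ← pow_succ] at hAB
        exact .inr ⟨i, j, hij, A, hA.trans (filter_subset _ _), B, hB.trans (filter_subset _ _),
          hAB⟩
    · right
      have hPa : (P a).Nonempty := card_pos.1 (by exact_mod_cast hs.trans_le hP.1)
      obtain ⟨j, hj, A, hA, hAcard, hsparse⟩ := exists_isSparseTo_of_forall_exists_card_filter_le
        hPa fun v hv => (hgood v hv).imp fun j hj => ⟨hj.1, hj.2.le⟩
      have hI : 0 < #I := card_pos.2 ⟨j, hj⟩
      have hIι : (#I : ℝ) ≤ Fintype.card ι := by exact_mod_cast card_le_univ I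
      have hι : (1 : ℝ) ≤ Fintype.card ι := by exact_mod_cast hI.trans_le (card_le_univ I)
      have hpow : ε ^ (#I + 1) * s ≤ s := mul_le_of_le_one_left hs.le (pow_le_one₀ hε.le hε1)
      refine ⟨a, j, (ne_of_mem_of_not_mem hj ha).symm, A, hA, P j, Subset.rfl, ?_, ?_, hsparse⟩
      · calc ε ^ (#I + 1) * s / Fintype.card ι ≤ #(P a) / #I := by
              gcongr; exact hpow.trans hP.1
          _ ≤ #A := hAcard
      · calc ε ^ (#I + 1) * s / Fintype.card ι ≤ s := (div_le_self (by positivity) hι).trans hpow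
          _ ≤ #(P j) := hP.2 j hj

end Transversal

section Ordered

variable {ι V : Type*} [LinearOrder ι] [LinearOrder V]

theorem exists_increasing_parts [Fintype ι] {S : Finset V} {t : ℕ}
    (h : Fintype.card ι * t ≤ #S) :
    ∃ P : ι → Finset V, (∀ i, P i ⊆ S) ∧ (∀ i, #(P i) = t) ∧
      ∀ i j, i < j → ∀ x ∈ P i, ∀ y ∈ P j, x < y := by
  let e : ι ×ₗ Fin t ↪o V :=
    (monoEquivOfFin (ι ×ₗ Fin t) (by simp)).symm.toOrderEmbedding.trans (S.orderEmbOfCardLe h)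
  refine ⟨fun i => univ.image fun x => e (toLex (i, x)), fun i => ?_, fun i => ?_,
    fun i j hij => ?_⟩
  · exact image_subset_iff.2 fun x _ => S.orderEmbOfCardLe_mem h _
  · rw [card_image_of_injective _ fun x y hxy => by simpa using hxy, card_univ, Fintype.card_fin]
  · simp only [mem_image, mem_univ, true_and, forall_exists_index, forall_apply_eq_imp_iff]
    exact fun x y => e.strictMono (Prod.Lex.toLex_lt_toLex.2 (.inl hij))

/-- `G` has no induced ordered subgraph isomorphic to `H`. -/
def IsOrderedFree (H : SimpleGraph ι) (G : SimpleGraph V) : Prop :=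
  ∀ φ : H ↪g G, ¬ StrictMono φ

theorem IsOrderedFree.not_isTransversalCopy [Fintype ι] {H : SimpleGraph ι} {G : SimpleGraph V}
    (hG : IsOrderedFree H G) {P : ι → Finset V}
    (hP : ∀ i j, i < j → ∀ x ∈ P i, ∀ y ∈ P j, x < y) (φ : ι → V) :
    ¬ IsTransversalCopy H G P univ φ := by
  rintro ⟨hφP, hφ⟩
  have hmono : StrictMono φ := fun i j hij =>
    hP i j hij _ (hφP i (mem_univ i)) _ (hφP j (mem_univ j))
  exact hG ⟨⟨φ, hmono.injective⟩, fun {i j} => (hφ i (mem_univ i) j (mem_univ j)).symm⟩ hmono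

/-- The proportion of a vertex set guaranteed on either side of an `ε`-sparse pair, in a graph with
no ordered copy of a given graph on `k` vertices. -/
noncomputable def sparsePairRatio (k : ℕ) (ε : ℝ) : ℝ :=
  ε ^ k / (2 * k ^ 2)

theorem sparsePairRatio_pos {k : ℕ} {ε : ℝ} (hk : 0 < k) (hε : 0 < ε) :
    0 < sparsePairRatio k ε := by
  unfold sparsePairRatio
  positivity

theorem sparsePairRatio_le_inv {k : ℕ} {ε : ℝ} (hk : 0 < k) (hε : 0 ≤ ε) (hε1 : ε ≤ 1) :
    sparsePairRatio k ε ≤ (k : ℝ)⁻¹ := by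
  have hk1 : (1 : ℝ) ≤ k := by exact_mod_cast hk
  rw [sparsePairRatio, ← one_div]
  gcongr
  · exact pow_le_one₀ hε hε1
  · nlinarith

theorem sparsePairRatio_mul_le {k n : ℕ} {ε : ℝ} (hk : 0 < k) (hkn : k ≤ n) (hε : 0 ≤ ε) :
    sparsePairRatio k ε * n ≤ ε ^ k * (n / k : ℕ) / k := by
  have hn : (n : ℝ) ≤ 2 * k * (n / k : ℕ) := by
    have hlt : n < k * (n / k + 1) := Nat.lt_mul_div_succ n hk
    have hle : k * 1 ≤ k * (n / k) := Nat.mul_le_mul_left _ (Nat.div_pos hkn hk)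
    exact_mod_cast (by lia : n ≤ 2 * k * (n / k))
  calc sparsePairRatio k ε * n ≤ ε ^ k / (2 * k ^ 2) * (2 * k * (n / k : ℕ)) := by
        unfold sparsePairRatio; gcongr
    _ = ε ^ k * (n / k : ℕ) / k := by field_simp

variable {H : SimpleGraph ι} {G : SimpleGraph V} {S : Finset V} {ε ε' c : ℝ}

theorem IsOrderedFree.exists_isSparseTo [Fintype ι] [Nonempty ι] (hG : IsOrderedFree H G)
    (hε : 0 < ε) (hε1 : ε ≤ 1) (hS : Fintype.card ι ≤ #S) :
    ∃ A ⊆ S, ∃ B ⊆ S, Disjoint A B ∧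
      sparsePairRatio (Fintype.card ι) ε * #S ≤ #A ∧
      sparsePairRatio (Fintype.card ι) ε * #S ≤ #B ∧
      (IsSparseTo G ε A B ∨ IsSparseTo Gᶜ ε A B) := by
  have hk : 0 < Fintype.card ι := Fintype.card_pos
  have : Nonempty V := (card_pos.1 (hk.trans_le hS)).to_type
  have ht : 0 < #S / Fintype.card ι := Nat.div_pos hS hk
  obtain ⟨P, hPS, hPcard, hP⟩ := exists_increasing_parts (ι := ι) (Nat.mul_div_le #S _)
  have hratio := sparsePairRatio_mul_le hk hS hε.le
  obtain ⟨φ, hφ⟩ | ⟨i, j, hij, A, hA, B, hB, hAcard, hBcard, hsparse⟩ :=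
    exists_isTransversalCopy_or_isSparseTo hε hε1 H G univ P (Nat.cast_pos.2 ht)
      fun i _ => by rw [hPcard]
  · exact absurd hφ (hG.not_isTransversalCopy hP φ)
  · rw [card_univ] at hAcard hBcard
    refine ⟨A, hA.trans (hPS i), B, hB.trans (hPS j), ?_, hratio.trans hAcard,
      hratio.trans hBcard, hsparse⟩
    refine disjoint_left.2 fun x hxA hxB => ?_
    rcases hij.lt_or_gt with hlt | hlt
    · exact (hP i j hlt x (hA hxA) x (hB hxB)).false
    · exact (hP j i hlt x (hB hxB) x (hA hxA)).false

theorem IsOrderedFree.hasSparseSubsets_or [Fintype ι] [Nonempty ι] (hG : IsOrderedFree H G)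
    (hε : 0 < ε) (hε1 : ε ≤ 1) (hε' : 0 < ε') (hc : 0 ≤ c) (hc1 : c ≤ 1)
    (hleft : ∀ T, HasSparseSubsets G (3 / 2 * ε) c T ∨ HasSparseSubsets Gᶜ ε' c T)
    (hright : ∀ T, HasSparseSubsets G ε c T ∨ HasSparseSubsets Gᶜ (3 / 2 * ε') c T)
    (S : Finset V) :
    HasSparseSubsets G ε (c * sparsePairRatio (Fintype.card ι) (min ε ε' / 16) / 2) S ∨
      HasSparseSubsets Gᶜ ε' (c * sparsePairRatio (Fintype.card ι) (min ε ε' / 16) / 2) S := by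
  have hk : 0 < Fintype.card ι := Fintype.card_pos
  have hmin : 0 < min ε ε' / 16 := by positivity
  have hmin1 : min ε ε' / 16 ≤ 1 := by linarith [min_le_left ε ε']
  rcases lt_or_ge #S (Fintype.card ι) with hS | hS
  · refine .inl (hasSparseSubsets_of_mul_card_lt_one ?_)
    have hratio : sparsePairRatio (Fintype.card ι) (min ε ε' / 16) * #S ≤ 1 :=
      calc _ ≤ (Fintype.card ι : ℝ)⁻¹ * Fintype.card ι := by
            gcongr
            exact sparsePairRatio_le_inv hk hmin.le hmin1
        _ = 1 := inv_mul_cancel₀ (by positivity)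
    nlinarith
  · obtain ⟨A, hAS, B, hBS, hAB, hA, hB, hsparse | hsparse⟩ := hG.exists_isSparseTo hmin hmin1 hS
    · exact hasSparseSubsets_or_of_isSparseTo hε.le hc hAS hBS hAB hA hB
        (hsparse.mono (by gcongr; exact min_le_left _ _)) hleft
    · exact (hasSparseSubsets_or_of_isSparseTo hε'.le hc hAS hBS hAB hA hB
        (hsparse.mono (by gcongr; exact min_le_right _ _)) fun T => (hright T).symm).symm

theorem exists_forall_hasSparseSubsets_or [Finite ι] [Nonempty ι] (H : SimpleGraph ι) (i j : ℕ) :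
    ∃ c : ℝ, 0 < c ∧ c ≤ 1 ∧
      ∀ (V : Type*) [LinearOrder V] (G : SimpleGraph V), IsOrderedFree H G → ∀ S : Finset V,
        HasSparseSubsets G ((2 / 3) ^ i) c S ∨ HasSparseSubsets Gᶜ ((2 / 3) ^ j) c S := by
  have := Fintype.ofFinite ι
  induction i generalizing j with
  | zero => exact ⟨1, one_pos, le_rfl, fun V _ G _ S =>
      .inl (by simpa using hasSparseSubsets_one_one G S)⟩
  | succ i ihi =>
    induction j with
    | zero => exact ⟨1, one_pos, le_rfl, fun V _ G _ S =>
        .inr (by simpa using hasSparseSubsets_one_one Gᶜ S)⟩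
    | succ j ihj =>
      obtain ⟨c, hc, hc1, hleft⟩ := ihi (j + 1)
      obtain ⟨d, hd, -, hright⟩ := ihj
      have hmul (n : ℕ) : 3 / 2 * (2 / 3 : ℝ) ^ (n + 1) = (2 / 3) ^ n := by ring
      have hpow (n : ℕ) : (2 / 3 : ℝ) ^ n ≤ 1 := pow_le_one₀ (by norm_num) (by norm_num)
      have hmin : min c d ≤ 1 := (min_le_left c d).trans hc1
      let ε : ℝ := min ((2 / 3) ^ (i + 1)) ((2 / 3) ^ (j + 1)) / 16
      have hε : 0 < ε := by positivity
      have hε1 : ε ≤ 1 :=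
        (div_le_self (by positivity) (by norm_num)).trans ((min_le_left _ _).trans (hpow _))
      have hratio := sparsePairRatio_pos (Fintype.card_pos (α := ι)) hε
      have hratio1 : sparsePairRatio (Fintype.card ι) ε ≤ 1 :=
        (sparsePairRatio_le_inv Fintype.card_pos hε.le hε1).trans (Nat.cast_inv_le_one _)
      refine ⟨min c d * sparsePairRatio (Fintype.card ι) ε / 2, by positivity, ?_,
        fun V _ G hG S => ?_⟩
      · linarith [mul_le_one₀ hmin hratio.le hratio1]
      · refine hG.hasSparseSubsets_or (by positivity) (hpow _) (by positivity) (by positivity) hmin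
          (fun T => ?_) (fun T => ?_) S
        · rw [hmul]
          exact (hleft V G hG T).imp (·.mono_ratio (min_le_left _ _))
            (·.mono_ratio (min_le_left _ _))
        · rw [hmul]
          exact (hright V G hG T).imp (·.mono_ratio (min_le_right _ _))
            (·.mono_ratio (min_le_right _ _))

theorem ordered_induced_low_degree_general [Finite ι] (H : SimpleGraph ι) {δ : ℝ} (hδ : 0 < δ) :
    ∃ c₂ : ℝ, 0 < c₂ ∧
      ∀ (V : Type*) [LinearOrder V] (G : SimpleGraph V), IsOrderedFree H G → ∀ S : Finset V,
        ∃ U ⊆ S, c₂ * #S ≤ #U ∧ (IsSparseTo G δ U U ∨ IsSparseTo Gᶜ δ U U) := by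
  rcases isEmpty_or_nonempty ι with hι | hι
  · exact ⟨1, one_pos, fun V _ G hG => absurd (Subsingleton.strictMono _) (hG (.ofIsEmpty _ _))⟩
  obtain ⟨i, hi⟩ := exists_pow_lt_of_lt_one (show 0 < δ / 4 by positivity)
    (show (2 / 3 : ℝ) < 1 by norm_num)
  obtain ⟨c, hc, -, hsparse⟩ := exists_forall_hasSparseSubsets_or H i i
  refine ⟨c / 4, by positivity, fun V _ G hG S => ?_⟩
  rcases hsparse V G hG S with h | h
  · obtain ⟨U, hUS, hU, hlow⟩ := (h.mono_density hi.le).exists_isSparseTo_self hδ.le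
    exact ⟨U, hUS, hU, .inl hlow⟩
  · obtain ⟨U, hUS, hU, hlow⟩ := (h.mono_density hi.le).exists_isSparseTo_self hδ.le
    exact ⟨U, hUS, hU, .inr hlow⟩

end Ordered

/-- For every ordered graph `H` and every `δ > 0` there is `c₂ > 0` such that every
ordered graph `G` on `n` vertices with no induced ordered copy of `H` has a subset `U`
of at least `c₂·n` vertices such that the maximum degree of `G[U]` is at most `δ·|U|`,
or the maximum degree of the complement of `G[U]` is at most `δ·|U|`. -/
theorem ordered_induced_low_degree (k : ℕ) (H : SimpleGraph (Fin k)) (δ : ℝ) (hδ : 0 < δ) :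
    ∃ c₂ : ℝ, 0 < c₂ ∧
      ∀ (n : ℕ) (G : SimpleGraph (Fin n)),
        ¬ ContainsOrdered H G →
        ∃ U : Finset (Fin n), c₂ * n ≤ (U.card : ℝ) ∧
          ((∀ v ∈ U, (degIn G U v : ℝ) ≤ δ * U.card) ∨
            (∀ v ∈ U, (degIn Gᶜ U v : ℝ) ≤ δ * U.card)) := by
  obtain ⟨c₂, hc₂, h⟩ := ordered_induced_low_degree_general H hδ
  refine ⟨c₂, hc₂, fun n G hG => ?_⟩
  obtain ⟨U, -, hcard, hU⟩ :=
    h (Fin n) G (fun φ hφ => hG ⟨φ, hφ, fun _ _ => φ.map_adj_iff.symm⟩) univ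
  exact ⟨U, by simpa using hcard, hU⟩
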